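/- Let M ≥ 2 be an integer, f : ℤ → ℂ a function with f(n+M) = f(n) for all n ∈ ℤ, ν ∈ {0,1}, and n ≥ 0 an integer with (n,ν) ≠ (0,0). Then (−1)^(n+1) · (M^(2n+ν)/(2n+ν+1)) · ∑_{m=1}^{M} f(m) · B_{2n+ν+1}(m/M) = (−1)^ν · (M/(2π))^(2n+ν+1) · ((2n+ν)!/√M) · ∑_{k=1}^∞ G_f^{(ν)}(k)/k^(2n+ν+1), where the series on the right converges absolutely. -/

import Mathlib

/-- The Fourier coefficient `G_f^{(ν)}(k)` of a function `f : ℤ → ℂ` of period `M`. -/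
noncomputable def GfC (M : ℕ) (f : ℤ → ℂ) (ν : ℕ) (k : ℕ) : ℂ :=
  if ν = 0 then
    (2 / (Real.sqrt M : ℂ)) *
      ∑ m ∈ Finset.range M, f m * (Real.sin (2 * Real.pi * m * k / M) : ℂ)
  else
    (2 / (Real.sqrt M : ℂ)) *
      ∑ m ∈ Finset.range M, f m * (Real.cos (2 * Real.pi * m * k / M) : ℂ)

theorem aux_hasSum (M : ℕ) (hM : 2 ≤ M) (f : ℤ → ℂ)
    (hf : ∀ n : ℤ, f (n + M) = f n) (s : ℕ) (hs : 2 ≤ s) (g : ℝ → ℝ) (c : ℝ)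
    (hg : ∀ x ∈ Set.Icc (0 : ℝ) 1, HasSum (fun n : ℕ => 1 / (n : ℝ) ^ s *
        g (2 * Real.pi * n * x))
      (c * (Polynomial.map (algebraMap ℚ ℝ) (Polynomial.bernoulli s)).eval x)) :
    HasSum (fun k : ℕ => ((2 / (Real.sqrt M : ℂ)) *
      ∑ m ∈ Finset.range M, f m * (g (2 * Real.pi * m * ((k + 1 : ℕ) : ℝ) / M) : ℂ)) /
        ((k : ℂ) + 1) ^ s)
      ((2 / (Real.sqrt M : ℂ)) * c * ∑ m ∈ Finset.Icc 1 M, f (m : ℤ) *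
        (((Polynomial.bernoulli s).eval ((m : ℚ) / (M : ℚ)) : ℚ) : ℂ)) := by
  have hM0 : (M : ℚ) ≠ 0 := by positivity
  have hsum : ∑ m ∈ Finset.Icc 1 M, f (m : ℤ) *
        (((Polynomial.bernoulli s).eval ((m : ℚ) / (M : ℚ)) : ℚ) : ℂ)
      = ∑ m ∈ Finset.range M, f (m : ℤ) *
        (((Polynomial.bernoulli s).eval ((m : ℚ) / (M : ℚ)) : ℚ) : ℂ) := by
    set F : ℕ → ℂ := fun m => f (m : ℤ) *
        (((Polynomial.bernoulli s).eval ((m : ℚ) / (M : ℚ)) : ℚ) : ℂ) with hF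
    have h0 : F M = F 0 := by
      have h1 : f (M : ℤ) = f 0 := by simpa using hf 0
      simp only [hF, div_self hM0, Nat.cast_zero, zero_div, h1,
        Polynomial.bernoulli_eval_one, Polynomial.bernoulli_eval_zero,
        bernoulli_eq_bernoulli'_of_ne_one (show s ≠ 1 by omega)]
    have h2 : ∑ m ∈ Finset.Icc 1 M, F m = ∑ m ∈ Finset.range M, F (m + 1) := by
      rw [Finset.range_eq_Ico, Finset.sum_Ico_add' F 0 M 1]
      rfl
    have h3 := Finset.sum_range_succ F M
    rw [Finset.sum_range_succ', h0] at h3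
    rw [h2]
    exact add_right_cancel h3
  rw [hsum]
  have key : ∀ m ∈ Finset.range M, HasSum (fun k : ℕ => f m *
      (((1 / (((k + 1 : ℕ) : ℝ)) ^ s *
        g (2 * Real.pi * ((k + 1 : ℕ) : ℝ) * ((m : ℝ) / M)) : ℝ)) : ℂ))
      (f m * ((c * (((Polynomial.bernoulli s).eval ((m : ℚ) / (M : ℚ)) : ℚ) : ℝ) : ℝ) : ℂ)) := by
    intro m hm
    rw [Finset.mem_range] at hm
    have hx : (m : ℝ) / M ∈ Set.Icc (0 : ℝ) 1 := by
      refine ⟨by positivity, ?_⟩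
      rw [div_le_one (by positivity)]
      exact_mod_cast hm.le
    have h1 := hg _ hx
    have h2 : (Polynomial.map (algebraMap ℚ ℝ) (Polynomial.bernoulli s)).eval ((m : ℝ) / M)
        = (((Polynomial.bernoulli s).eval ((m : ℚ) / (M : ℚ)) : ℚ) : ℝ) := by
      have := Polynomial.eval_map_apply (algebraMap ℚ ℝ) ((m : ℚ) / M)
        (p := Polynomial.bernoulli s)
      simpa using this
    rw [h2] at h1
    have h3 := (hasSum_nat_add_iff' 1).mpr h1
    have h4 : (0 : ℝ) ^ s = 0 := zero_pow (by omega)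
    simp only [Finset.sum_range_one, Nat.cast_zero, h4, div_zero, zero_mul, sub_zero] at h3
    exact (Complex.hasSum_ofReal.mpr h3).mul_left _
  have h := (hasSum_sum key).mul_left (2 / (Real.sqrt M : ℂ))
  convert! h using 1
  · funext k
    rw [mul_div_assoc, Finset.sum_div]
    congr 1
    refine Finset.sum_congr rfl fun m _ => ?_
    have : 2 * Real.pi * m * ((k + 1 : ℕ) : ℝ) / M
      = 2 * Real.pi * ((k + 1 : ℕ) : ℝ) * ((m : ℝ) / M) := by ring
    rw [this]
    push_cast
    ring
  · rw [mul_assoc, Finset.mul_sum]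
    congr 1
    refine Finset.sum_congr rfl fun m _ => ?_
    push_cast
    ring

/-- For a periodic `f : ℤ → ℂ` of period `M ≥ 2`, `ν ∈ {0,1}` and
`n ≥ 0` with `(n,ν) ≠ (0,0)`,
`(−1)^(n+1) (M^(2n+ν)/(2n+ν+1)) ∑_{m=1}^M f(m) B_{2n+ν+1}(m/M)
  = (−1)^ν (M/(2π))^(2n+ν+1) ((2n+ν)!/√M) ∑_{k≥1} G_f^{(ν)}(k)/k^(2n+ν+1)`,
where the series on the right converges absolutely. -/
theorem Lvalue_fourier_expansion (M : ℕ) (hM : 2 ≤ M) (f : ℤ → ℂ)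
    (hf : ∀ n : ℤ, f (n + M) = f n) (ν : ℕ) (hν : ν = 0 ∨ ν = 1)
    (n : ℕ) (hn : ¬(n = 0 ∧ ν = 0)) :
    (Summable fun k : ℕ => ‖GfC M f ν (k + 1) / ((k : ℂ) + 1) ^ (2 * n + ν + 1)‖) ∧
    (-1) ^ (n + 1) * ((M : ℂ) ^ (2 * n + ν) / (2 * n + ν + 1)) *
        ∑ m ∈ Finset.Icc 1 M,
          f (m : ℤ) *
            (((Polynomial.bernoulli (2 * n + ν + 1)).eval ((m : ℚ) / (M : ℚ)) : ℚ) : ℂ)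
      = (-1) ^ ν * ((M : ℂ) / (2 * (Real.pi : ℂ))) ^ (2 * n + ν + 1) *
          (((2 * n + ν).factorial : ℂ) / (Real.sqrt M : ℂ)) *
          ∑' k : ℕ, GfC M f ν (k + 1) / ((k : ℂ) + 1) ^ (2 * n + ν + 1) := by
  have hsq : (Real.sqrt M : ℂ) * (Real.sqrt M : ℂ) = M := by
    rw [← Complex.ofReal_mul, Real.mul_self_sqrt (by positivity)]
    simp
  have hM0 : (M : ℂ) ≠ 0 := by
    have : M ≠ 0 := by omega
    exact_mod_cast this
  have hsq0 : (Real.sqrt M : ℂ) ≠ 0 := by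
    intro h
    rw [h] at hsq
    exact hM0 (by rw [← hsq]; simp)
  have hpi : (Real.pi : ℂ) ≠ 0 := by exact_mod_cast Real.pi_ne_zero
  have halg : ∀ (S c : ℂ) (s : ℕ), 1 ≤ s →
      c = (-1) ^ (n + 1 + ν) * (2 * Real.pi : ℂ) ^ s / 2 / (s.factorial : ℂ) →
      (-1) ^ (n + 1) * ((M : ℂ) ^ (s - 1) / s) * S
      = (-1) ^ ν * ((M : ℂ) / (2 * (Real.pi : ℂ))) ^ s *
          (((s - 1).factorial : ℂ) / (Real.sqrt M : ℂ)) *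
          (2 / (Real.sqrt M : ℂ) * c * S) := by
    intro S c s hs hc
    obtain ⟨t, rfl⟩ : ∃ t, s = t + 1 := ⟨s - 1, by omega⟩
    have ht : ((t + 1 : ℕ) : ℂ) ≠ 0 := by exact_mod_cast Nat.succ_ne_zero t
    have hfac : (t.factorial : ℂ) ≠ 0 := by exact_mod_cast t.factorial_ne_zero
    have h1 : ((-1 : ℂ)) ^ ν * (-1) ^ ν = 1 := by rw [← mul_pow]; simp
    have h2 : ((M : ℂ) / (2 * (Real.pi : ℂ))) ^ (t + 1) * (2 * Real.pi : ℂ) ^ (t + 1)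
        = (M : ℂ) ^ t * M := by
      rw [← mul_pow, div_mul_cancel₀ _ (by simp [hpi]), pow_succ]
    rw [hc, Nat.factorial_succ, Nat.add_sub_cancel, pow_add (-1 : ℂ) (n + 1) ν]
    calc _ = ((-1 : ℂ) ^ ν * (-1) ^ ν) * ((M : ℂ) ^ t * M) * (-1) ^ (n + 1) *
            (t.factorial / t.factorial) / ((Real.sqrt M : ℂ) * (Real.sqrt M : ℂ)) / ((t + 1 : ℕ) : ℂ) * S := by
          rw [h1, div_self hfac, hsq]; field_simp
      _ = _ := by
          rw [← h2]
          generalize ((M : ℂ) / (2 * (Real.pi : ℂ))) ^ (t + 1) = A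
          push_cast at ht ⊢
          field_simp
  obtain ⟨c, hc, hS⟩ : ∃ c : ℝ,
      (c : ℂ) = (-1) ^ (n + 1 + ν) * (2 * Real.pi : ℂ) ^ (2 * n + ν + 1) / 2 /
        ((2 * n + ν + 1).factorial : ℂ) ∧
      HasSum (fun k : ℕ => GfC M f ν (k + 1) / ((k : ℂ) + 1) ^ (2 * n + ν + 1))
        (2 / (Real.sqrt M : ℂ) * c * ∑ m ∈ Finset.Icc 1 M, f (m : ℤ) *
        (((Polynomial.bernoulli (2 * n + ν + 1)).eval ((m : ℚ) / (M : ℚ)) : ℚ) : ℂ)) := by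
    rcases hν with rfl | rfl
    · have hn0 : n ≠ 0 := fun h => hn ⟨h, rfl⟩
      refine ⟨((-1 : ℝ) ^ (n + 1) * (2 * Real.pi) ^ (2 * n + 1) / 2 /
        ((2 * n + 1).factorial : ℝ)), by push_cast; rfl, ?_⟩
      have := aux_hasSum M hM f hf (2 * n + 1) (by omega) Real.sin _
        (fun x hx => hasSum_one_div_nat_pow_mul_sin hn0 hx)
      simpa only [GfC, if_true, add_zero] using this
    · refine ⟨((-1 : ℝ) ^ (n + 1 + 1) * (2 * Real.pi) ^ (2 * (n + 1)) / 2 /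
        ((2 * (n + 1)).factorial : ℝ)), by push_cast; rfl, ?_⟩
      have := aux_hasSum M hM f hf (2 * (n + 1)) (by omega) Real.cos _
        (fun x hx => hasSum_one_div_nat_pow_mul_cos (Nat.succ_ne_zero n) hx)
      simp only [Nat.succ_eq_add_one, show 2 * (n + 1) = 2 * n + 1 + 1 by ring] at this ⊢
      simpa only [GfC, one_ne_zero, if_false] using this
  refine ⟨hS.summable.norm, ?_⟩
  rw [hS.tsum_eq]
  have := halg (∑ m ∈ Finset.Icc 1 M, f (m : ℤ) *
    (((Polynomial.bernoulli (2 * n + ν + 1)).eval ((m : ℚ) / (M : ℚ)) : ℚ) : ℂ))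
    c (2 * n + ν + 1) (by omega) hc
  simpa only [Nat.add_sub_cancel, Nat.cast_add, Nat.cast_mul, Nat.cast_ofNat,
    Nat.cast_one] using this
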